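/- Given a consistent belief system on the tree T and the tree-factorized distribution b(x) = ( ∏_{{i,j}∈E(T)} b_{ij}(x_i, x_j) ) · ∏_{i∈V} b_i(x_i)^{1 - deg(i)}, the Bethe free energy of the belief system equals the variational free energy of b: F_B = Σ_x b(x) · ln( b(x) / p̃(x) ). -/

import Mathlib

open Finset

/-- The tree-factorized distribution
`b(x) = (Π_{{i,j} ∈ E(T)} b_{ij}(x_i, x_j)) · Π_i b_i(x_i)^{1 - deg(i)}`
built from node beliefs `b1` and (symmetric) pairwise beliefs `b2`. -/
noncomputable def treeFactorized {V : Type*} [Fintype V] [DecidableEq V]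
    {X : V → Type*} (T : SimpleGraph V) [DecidableRel T.Adj]
    (b1 : (i : V) → X i → ℝ) (b2 : (i j : V) → X i → X j → ℝ)
    (hsym : ∀ i j s t, b2 i j s t = b2 j i t s)
    (x : (i : V) → X i) : ℝ :=
  (∏ e ∈ T.edgeFinset,
      Sym2.lift ⟨fun i j => b2 i j (x i) (x j), fun i j => hsym i j (x i) (x j)⟩ e)
    * ∏ i : V, b1 i (x i) ^ ((1 : ℤ) - T.degree i)

/-- The per-edge Bethe term `Σ_{s,t} b_{ij}(s,t) · ln (b_{ij}(s,t) / ψ_{ij}(s,t))`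
is a symmetric function of the (ordered) edge, hence descends to `Sym2 V`. -/
theorem betheEdgeTerm_symm {V : Type*} {X : V → Type*} [∀ i, Fintype (X i)]
    (b2 ψ2 : (i j : V) → X i → X j → ℝ)
    (hbsym : ∀ i j s t, b2 i j s t = b2 j i t s)
    (hψsym : ∀ i j s t, ψ2 i j s t = ψ2 j i t s) (i j : V) :
    (∑ s : X i, ∑ t : X j, b2 i j s t * Real.log (b2 i j s t / ψ2 i j s t))
      = ∑ t : X j, ∑ s : X i, b2 j i t s * Real.log (b2 j i t s / ψ2 j i t s) := by
  rw [Finset.sum_comm]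
  exact Finset.sum_congr rfl fun t _ => Finset.sum_congr rfl fun s _ => by
    rw [hbsym, hψsym]

/-- The Bethe free energy of a belief system `(b1, b2)` relative to edge
potentials `ψ2` on the tree `T`:
`F_B = Σ_{{i,j}∈E(T)} Σ_{s,t} b_{ij}(s,t) ln (b_{ij}(s,t)/ψ_{ij}(s,t))
       - Σ_i (deg(i) - 1) Σ_s b_i(s) ln b_i(s)`. -/
noncomputable def betheFreeEnergy {V : Type*} [Fintype V] [DecidableEq V]
    {X : V → Type*} [∀ i, Fintype (X i)] (T : SimpleGraph V) [DecidableRel T.Adj]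
    (b1 : (i : V) → X i → ℝ) (b2 ψ2 : (i j : V) → X i → X j → ℝ)
    (hbsym : ∀ i j s t, b2 i j s t = b2 j i t s)
    (hψsym : ∀ i j s t, ψ2 i j s t = ψ2 j i t s) : ℝ :=
  (∑ e ∈ T.edgeFinset,
      Sym2.lift ⟨fun i j => ∑ s : X i, ∑ t : X j,
          b2 i j s t * Real.log (b2 i j s t / ψ2 i j s t),
        betheEdgeTerm_symm b2 ψ2 hbsym hψsym⟩ e)
    - ∑ i : V, ((T.degree i : ℝ) - 1) * ∑ s : X i, b1 i s * Real.log (b1 i s)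

/-- The unnormalized pairwise MRF `p̃(x) = Π_{{i,j}∈E(T)} ψ_{ij}(x_i, x_j)`. -/
noncomputable def treePotentialProd {V : Type*} [Fintype V] [DecidableEq V]
    {X : V → Type*} (T : SimpleGraph V) [DecidableRel T.Adj]
    (ψ2 : (i j : V) → X i → X j → ℝ)
    (hψsym : ∀ i j s t, ψ2 i j s t = ψ2 j i t s)
    (x : (i : V) → X i) : ℝ :=
  ∏ e ∈ T.edgeFinset,
    Sym2.lift ⟨fun i j => ψ2 i j (x i) (x j), fun i j => hψsym i j (x i) (x j)⟩ e

/-!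
Write `w_{ij} = b_{ij} / (b_i b_j)`, so that `b(x) = ∏_i b_i(x_i) · ∏_{ij} w_{ij}(x_i, x_j)`.
Orient the edges towards a root `r` and sum out the other vertices in order of decreasing depth:
when the turn of `v` comes, `x_v` occurs only in `b_v` and in the factor `w` of the edge from `v`
to its parent `u`, and `∑_s b_v(s) w_{vu}(s, x_u) = 1` by marginal consistency. Stopping at `r`,
or at `r` and one of its neighbours, shows that `b` has marginals `b_i` and `b_{ij}`. Since
`ln (b / p̃)` is a sum of functions of one vertex or one edge, its mean under `b` is `F_B`. A forest
inherits the orientation of a tree that contains it, so the argument applies to forests as well.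
-/

section ProductMean

open Function

variable {ι R : Type*} [Fintype ι] [DecidableEq ι] {X : ι → Type*} [CommSemiring R]

theorem prod_mul_eq_prod_update_mul (b : (i : ι) → X i → R) (x : (i : ι) → X i) (i : ι) (s : X i) :
    (∏ j, b j (x j)) * b i s = (∏ j, b j (update x i s j)) * b i (x i) := by
  have h_rest : ∏ j ∈ univ.erase i, b j (update x i s j) = ∏ j ∈ univ.erase i, b j (x j) :=
    prod_congr rfl fun j hj => by rw [update_of_ne (ne_of_mem_erase hj)]
  rw [← mul_prod_erase univ _ (mem_univ i), ← mul_prod_erase univ _ (mem_univ i), h_rest,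
    update_self]
  ring

variable [∀ i, Fintype (X i)]

/-- The mean of `φ` when the coordinates `x i` are independent with weights `b i`. -/
def productMean (b : (i : ι) → X i → R) (φ : ((i : ι) → X i) → R) : R :=
  ∑ x, (∏ i, b i (x i)) * φ x

theorem productMean_const {b : (i : ι) → X i → R} (hb : ∀ i, ∑ s, b i s = 1) (c : R) :
    productMean b (fun _ => c) = c := by
  simp only [productMean, ← Finset.sum_mul, ← Fintype.prod_sum, hb, prod_const_one, one_mul]

-- Exchanging `x i` with the resampled value `s` preserves the weight `(∏ j, b j (x j)) * b i s`.
theorem productMean_average {b : (i : ι) → X i → R} {i : ι} (hb : ∑ s, b i s = 1)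
    (φ : ((i : ι) → X i) → R) :
    productMean b (fun x => ∑ s, b i s * φ (update x i s)) = productMean b φ := by
  let exchange : ((i : ι) → X i) × X i → ((i : ι) → X i) × X i := fun q => (update q.1 i q.2, q.1 i)
  have h_exchange : Involutive exchange := fun q => by simp [exchange]
  calc productMean b (fun x => ∑ s, b i s * φ (update x i s))
      = ∑ q : ((i : ι) → X i) × X i, (∏ j, b j (q.1 j)) * b i q.2 * φ (update q.1 i q.2) := by
        simp only [productMean, mul_sum, Fintype.sum_prod_type, mul_assoc]
    _ = ∑ q, (∏ j, b j ((exchange q).1 j)) * b i (exchange q).2 * φ (exchange q).1 :=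
        sum_congr rfl fun q _ => by rw [prod_mul_eq_prod_update_mul b q.1 i q.2]
    _ = ∑ q : ((i : ι) → X i) × X i, (∏ j, b j (q.1 j)) * b i q.2 * φ q.1 :=
        Equiv.sum_comp h_exchange.toPerm fun q => (∏ j, b j (q.1 j)) * b i q.2 * φ q.1
    _ = productMean b φ := by
        simp only [productMean, Fintype.sum_prod_type, ← Finset.sum_mul, ← mul_sum, hb, mul_one]

theorem productMean_eval {b : (i : ι) → X i → R} (hb : ∀ i, ∑ s, b i s = 1) (i : ι)
    (f : X i → R) : productMean b (fun x => f (x i)) = ∑ s, b i s * f s := by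
  rw [← productMean_average (hb i)]
  simp only [update_self, productMean_const hb]

theorem productMean_eval₂ {b : (i : ι) → X i → R} (hb : ∀ i, ∑ s, b i s = 1) {i j : ι}
    (hij : i ≠ j) (f : X i → X j → R) :
    productMean b (fun x => f (x i) (x j)) = ∑ s, b i s * ∑ t, b j t * f s t := by
  rw [← productMean_average (hb j)]
  simp only [update_self, update_of_ne hij]
  exact productMean_eval hb i fun s => ∑ t, b j t * f s t

theorem productMean_mul_prod_of_average_eq_one {α : Type*} [LinearOrder α]
    {b : (i : ι) → X i → R} (hb : ∀ i, ∑ s, b i s = 1) (depth : ι → α) (S : Finset ι)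
    (φ : ι → ((i : ι) → X i) → R) (f : ((i : ι) → X i) → R)
    (hφ_one : ∀ v ∈ S, ∀ x, ∑ s, b v s * φ v (update x v s) = 1)
    (hφ_dep : ∀ v ∈ S, DependsOn (φ v) (insert v {u | depth u < depth v}))
    (hf_dep : DependsOn f (S : Set ι)ᶜ) :
    productMean b (fun x => f x * ∏ v ∈ S, φ v x) = productMean b f := by
  induction S using Finset.induction_on_max_value depth with
  | empty => simp only [prod_empty, mul_one]
  | insert v S hvS hmax ih =>
    have hf_update (x : (i : ι) → X i) (s : X v) : f (update x v s) = f x :=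
      hf_dep fun u hu => update_of_ne (fun huv => hu (by simp [huv])) _ _
    have hφ_update (x : (i : ι) → X i) (s : X v) :
        ∏ u ∈ S, φ u (update x v s) = ∏ u ∈ S, φ u x := by
      refine prod_congr rfl fun u hu => hφ_dep u (mem_insert_of_mem hu) fun w hw => ?_
      refine update_of_ne ?_ _ _
      rintro rfl
      exact hw.elim (fun hwu => hvS (hwu ▸ hu)) (hmax u hu).not_gt
    have h_average (x : (i : ι) → X i) :
        ∑ s, b v s * (f (update x v s) * ∏ u ∈ insert v S, φ u (update x v s)) =
          f x * ∏ u ∈ S, φ u x := by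
      simp only [prod_insert hvS, hf_update, hφ_update, mul_left_comm (f x), ← mul_assoc (b v _)]
      rw [← Finset.sum_mul, hφ_one v (mem_insert_self v S), one_mul]
    rw [← productMean_average (hb v)]
    simp only [h_average]
    exact ih (fun u hu => hφ_one u (mem_insert_of_mem hu))
      (fun u hu => hφ_dep u (mem_insert_of_mem hu))
      (hf_dep.mono (Set.compl_subset_compl.mpr (coe_subset.mpr (subset_insert v S))))

end ProductMean

section RootedOrientation

variable {V : Type*}

/-- An orientation of the edges of `G` towards roots, one of which is `r`: every edge joins a vertex
of `nonroots` to its `parent`, which is less deep. -/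
structure RootedOrientation (G : SimpleGraph V) (r : V) where
  /-- The vertices that have a parent. -/
  nonroots : Finset V
  /-- The parent of a vertex; its value outside `nonroots` is irrelevant. -/
  parent : V → V
  /-- A rank that decreases from each vertex to its parent. -/
  depth : V → ℕ
  root_notMem : r ∉ nonroots
  adj_parent : ∀ v ∈ nonroots, G.Adj v (parent v)
  depth_parent_lt : ∀ v ∈ nonroots, depth (parent v) < depth v
  parent_eq_or_parent_eq : ∀ u v, G.Adj u v →
    (u ∈ nonroots ∧ parent u = v) ∨ (v ∈ nonroots ∧ parent v = u)

-- Extend the forest to a tree; the parent of `v` is the last vertex before `v` on the path from `r`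
-- to `v`, and `v` is a root of the forest if the edge to its parent was added.
theorem nonempty_rootedOrientation [Finite V] {G : SimpleGraph V} (hG : G.IsAcyclic) (r : V) :
    Nonempty (RootedOrientation G r) := by
  classical
  have := Fintype.ofFinite V
  have : Nonempty V := ⟨r⟩
  obtain ⟨T, hGT, -, hT⟩ :=
    SimpleGraph.connected_top.exists_isTree_le_of_le_of_isAcyclic le_top hG
  choose path h_path h_length using hT.connected.exists_path_of_dist r
  have h_root : ¬ G.Adj r (path r).penultimate := by
    have h_nil := SimpleGraph.Walk.isPath_iff_nil.mp (h_path r)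
    rw [SimpleGraph.Walk.eq_nil_iff_nil.mpr h_nil, SimpleGraph.Walk.penultimate_nil]
    exact G.irrefl
  have h_depth (v : V) (hv : v ≠ r) : T.dist r (path v).penultimate < T.dist r v := by
    have h_not_nil : ¬ (path v).Nil := SimpleGraph.Walk.not_nil_of_ne hv.symm
    rw [← h_length v, ← SimpleGraph.Walk.length_dropLast_add_one h_not_nil, Nat.lt_add_one_iff]
    exact SimpleGraph.dist_le _
  have h_parent (u v : V) (huv : G.Adj u v) (hv : v ∈ (path u).support) :
      (path u).penultimate = v :=
    (hT.isAcyclic.eq_penultimate_of_adj_end (h_path u) (hGT huv) hv).symm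
  refine ⟨{
    nonroots := {v | G.Adj v (path v).penultimate}
    parent := fun v => (path v).penultimate
    depth := T.dist r
    root_notMem := by simpa using h_root
    adj_parent := fun v hv => (mem_filter_univ v).mp hv
    depth_parent_lt := fun v hv =>
      h_depth v fun hvr => h_root (hvr ▸ (mem_filter_univ v).mp hv)
    parent_eq_or_parent_eq := fun u v huv => ?_ }⟩
  simp only [mem_filter_univ]
  by_cases hv : v ∈ (path u).support
  · have hu_parent := h_parent u v huv hv
    exact .inl ⟨hu_parent.symm ▸ huv, hu_parent⟩
  · have hu : u ∈ (path v).support :=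
      hT.isAcyclic.mem_support_of_ne_mem_support_of_adj_of_isPath (h_path v) (h_path u)
        (hGT huv.symm) hv
    have hv_parent := h_parent v u huv.symm hu
    exact .inr ⟨hv_parent.symm ▸ huv.symm, hv_parent⟩

namespace RootedOrientation

variable {G : SimpleGraph V} {r : V}

theorem mem_nonroots_and_parent_eq_of_adj (O : RootedOrientation G r) {v : V} (hrv : G.Adj r v) :
    v ∈ O.nonroots ∧ O.parent v = r :=
  (O.parent_eq_or_parent_eq r v hrv).resolve_left fun h => O.root_notMem h.1

theorem injOn_edge (O : RootedOrientation G r) :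
    Set.InjOn (fun v => s(v, O.parent v)) (O.nonroots : Set V) := by
  intro u hu v hv huv
  rcases Sym2.eq_iff.mp huv with ⟨h_eq, -⟩ | ⟨hu_parent, hv_parent⟩
  · exact h_eq
  · have h_lt_u := O.depth_parent_lt u hu
    have h_lt_v := O.depth_parent_lt v hv
    rw [hv_parent] at h_lt_u
    rw [← hu_parent] at h_lt_v
    exact absurd h_lt_u h_lt_v.not_gt

theorem image_edge_eq_edgeFinset [DecidableEq V] [Fintype G.edgeSet] (O : RootedOrientation G r) :
    O.nonroots.image (fun v => s(v, O.parent v)) = G.edgeFinset := by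
  ext e
  induction e with | _ u v =>
  simp only [mem_image, SimpleGraph.mem_edgeFinset, SimpleGraph.mem_edgeSet]
  constructor
  · rintro ⟨w, hw, hwe⟩
    rw [← SimpleGraph.mem_edgeSet, ← hwe]
    exact O.adj_parent w hw
  · intro huv
    rcases O.parent_eq_or_parent_eq u v huv with ⟨hu, rfl⟩ | ⟨hv, rfl⟩
    · exact ⟨u, hu, rfl⟩
    · exact ⟨v, hv, Sym2.eq_swap⟩

theorem prod_edgeFinset {M : Type*} [CommMonoid M] [Fintype G.edgeSet] (O : RootedOrientation G r)
    (F : Sym2 V → M) : ∏ e ∈ G.edgeFinset, F e = ∏ v ∈ O.nonroots, F s(v, O.parent v) := by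
  classical
  rw [← O.image_edge_eq_edgeFinset, prod_image O.injOn_edge]

end RootedOrientation

end RootedOrientation

theorem prod_edgeFinset_mul_eq_prod_pow_degree {V M : Type*} [Fintype V] [CommMonoid M]
    (G : SimpleGraph V) [DecidableRel G.Adj] (g : V → M) :
    ∏ e ∈ G.edgeFinset, Sym2.lift ⟨fun i j => g i * g j, fun _ _ => mul_comm _ _⟩ e =
      ∏ i, g i ^ G.degree i := by
  classical
  have h_endpoints : ∀ e ∈ G.edgeFinset,
      Sym2.lift ⟨fun i j => g i * g j, fun _ _ => mul_comm _ _⟩ e =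
        ∏ i, if i ∈ e then g i else 1 := by
    intro e he
    induction e with | _ i j =>
    have hij : i ≠ j := (SimpleGraph.mem_edgeFinset.mp he : G.Adj i j).ne
    have h_filter : ({k | k ∈ s(i, j)} : Finset V) = {i, j} := by ext k; simp
    rw [← prod_filter, h_filter, prod_pair hij, Sym2.lift_mk]
  rw [prod_congr rfl h_endpoints, prod_comm]
  refine prod_congr rfl fun i _ => ?_
  rw [← prod_filter, prod_const, ← G.card_incidenceFinset_eq_degree, G.incidenceFinset_eq_filter]

section EdgeRatio

variable {V K : Type*} {X : V → Type*} [Field K]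

/-- The dependence factor `b_{ij}(x_i, x_j) / (b_i(x_i) b_j(x_j))` of the pair `i`, `j`; it is `1`
when the pairwise belief is the product of the node beliefs. -/
def edgeRatio (b1 : (i : V) → X i → K) (b2 : (i j : V) → X i → X j → K) (x : (i : V) → X i)
    (i j : V) : K :=
  b2 i j (x i) (x j) / (b1 i (x i) * b1 j (x j))

theorem edgeRatio_comm (b1 : (i : V) → X i → K) {b2 : (i j : V) → X i → X j → K}
    (hbsym : ∀ i j s t, b2 i j s t = b2 j i t s) (x : (i : V) → X i) (i j : V) :
    edgeRatio b1 b2 x i j = edgeRatio b1 b2 x j i := by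
  rw [edgeRatio, edgeRatio, hbsym, mul_comm (b1 i _)]

theorem dependsOn_edgeRatio (b1 : (i : V) → X i → K) (b2 : (i j : V) → X i → X j → K) (i j : V) :
    DependsOn (fun x => edgeRatio b1 b2 x i j) {i, j} := by
  intro x y hxy
  simp only [edgeRatio, hxy i (by simp), hxy j (by simp)]

theorem sum_mul_edgeRatio_update [DecidableEq V] [∀ i, Fintype (X i)]
    {b1 : (i : V) → X i → K} {b2 : (i j : V) → X i → X j → K} (hb1 : ∀ i s, b1 i s ≠ 0)
    (hbsym : ∀ i j s t, b2 i j s t = b2 j i t s) {v u : V} (huv : u ≠ v)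
    (hmarg : ∀ s : X u, ∑ t : X v, b2 u v s t = b1 u s) (x : (i : V) → X i) :
    ∑ t, b1 v t * edgeRatio b1 b2 (Function.update x v t) v u = 1 := by
  have h_cancel (t : X v) : b1 v t * edgeRatio b1 b2 (Function.update x v t) v u =
      b2 u v (x u) t / b1 u (x u) := by
    rw [edgeRatio, Function.update_self, Function.update_of_ne huv, hbsym]
    have := hb1 v t
    have := hb1 u (x u)
    field_simp
  simp only [h_cancel]
  rw [← sum_div, hmarg, div_self (hb1 u (x u))]

theorem productMean_mul_prod_edgeRatio [Fintype V] [DecidableEq V] [∀ i, Fintype (X i)]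
    {G : SimpleGraph V} {r : V} {b1 : (i : V) → X i → K} {b2 : (i j : V) → X i → X j → K}
    (O : RootedOrientation G r) (hb1 : ∀ i s, b1 i s ≠ 0) (hb1sum : ∀ i, ∑ s, b1 i s = 1)
    (hbsym : ∀ i j s t, b2 i j s t = b2 j i t s)
    (hmarg : ∀ i j, G.Adj i j → ∀ s : X i, ∑ t : X j, b2 i j s t = b1 i s)
    {S : Finset V} (hS : S ⊆ O.nonroots) {f : ((i : V) → X i) → K}
    (hf : DependsOn f (S : Set V)ᶜ) :
    productMean b1 (fun x => f x * ∏ v ∈ S, edgeRatio b1 b2 x v (O.parent v)) =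
      productMean b1 f := by
  refine productMean_mul_prod_of_average_eq_one hb1sum O.depth S
    (fun v x => edgeRatio b1 b2 x v (O.parent v)) f (fun v hv => ?_) (fun v hv => ?_) hf
  · have h_adj := (O.adj_parent v (hS hv)).symm
    exact sum_mul_edgeRatio_update hb1 hbsym h_adj.ne (hmarg _ _ h_adj)
  · exact (dependsOn_edgeRatio b1 b2 v (O.parent v)).mono <| Set.insert_subset_insert <|
      Set.singleton_subset_iff.mpr (O.depth_parent_lt v (hS hv))

end EdgeRatio

section Beliefs

variable {V : Type*} [Fintype V] [DecidableEq V] {X : V → Type*}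
  (G : SimpleGraph V) [DecidableRel G.Adj]
  {b1 : (i : V) → X i → ℝ} {b2 ψ2 : (i j : V) → X i → X j → ℝ}

theorem treeFactorized_eq_prod_mul_prod_edgeRatio (hb1 : ∀ i s, b1 i s ≠ 0)
    (hbsym : ∀ i j s t, b2 i j s t = b2 j i t s) (x : (i : V) → X i) :
    treeFactorized G b1 b2 hbsym x = (∏ i, b1 i (x i)) *
      ∏ e ∈ G.edgeFinset, Sym2.lift ⟨edgeRatio b1 b2 x, edgeRatio_comm b1 hbsym x⟩ e := by
  have h_nodes : ∏ i, b1 i (x i) ^ ((1 : ℤ) - G.degree i) =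
      (∏ i, b1 i (x i)) / ∏ i, b1 i (x i) ^ G.degree i := by
    rw [← prod_div_distrib]
    refine prod_congr rfl fun i _ => ?_
    rw [zpow_sub₀ (hb1 i (x i)), zpow_one, zpow_natCast]
  have h_ratio (e : Sym2 V) : Sym2.lift ⟨edgeRatio b1 b2 x, edgeRatio_comm b1 hbsym x⟩ e =
      Sym2.lift ⟨fun i j => b2 i j (x i) (x j), fun i j => hbsym i j (x i) (x j)⟩ e /
        Sym2.lift ⟨fun i j => b1 i (x i) * b1 j (x j), fun _ _ => mul_comm _ _⟩ e := by
    induction e with | _ i j => rfl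
  simp only [treeFactorized, h_nodes, h_ratio, prod_div_distrib]
  rw [prod_edgeFinset_mul_eq_prod_pow_degree G fun i => b1 i (x i)]
  ring

theorem log_treeFactorized_div_treePotentialProd (hb1 : ∀ i s, b1 i s ≠ 0)
    (hbsym : ∀ i j s t, b2 i j s t = b2 j i t s)
    (hb2 : ∀ i j, G.Adj i j → ∀ s t, b2 i j s t ≠ 0)
    (hψsym : ∀ i j s t, ψ2 i j s t = ψ2 j i t s)
    (hψ : ∀ i j, G.Adj i j → ∀ s t, ψ2 i j s t ≠ 0) (x : (i : V) → X i) :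
    Real.log (treeFactorized G b1 b2 hbsym x / treePotentialProd G ψ2 hψsym x) =
      ∑ e ∈ G.edgeFinset,
        Sym2.lift ⟨fun i j => Real.log (b2 i j (x i) (x j) / ψ2 i j (x i) (x j)),
          fun i j => by simp only [hbsym i j, hψsym i j]⟩ e
      - ∑ i, ((G.degree i : ℝ) - 1) * Real.log (b1 i (x i)) := by
  have h_ratio (e : Sym2 V) :
      Sym2.lift ⟨fun i j => b2 i j (x i) (x j), fun i j => hbsym i j (x i) (x j)⟩ e /
        Sym2.lift ⟨fun i j => ψ2 i j (x i) (x j), fun i j => hψsym i j (x i) (x j)⟩ e =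
      Sym2.lift ⟨fun i j => b2 i j (x i) (x j) / ψ2 i j (x i) (x j),
        fun i j => by simp only [hbsym i j, hψsym i j]⟩ e := by
    induction e with | _ i j => rfl
  have h_edge_ne : ∀ e ∈ G.edgeFinset, Sym2.lift
      ⟨fun i j => b2 i j (x i) (x j) / ψ2 i j (x i) (x j),
        fun i j => by simp only [hbsym i j, hψsym i j]⟩ e ≠ 0 := by
    intro e he
    induction e with | _ i j =>
    have hij : G.Adj i j := SimpleGraph.mem_edgeFinset.mp he
    exact div_ne_zero (hb2 i j hij _ _) (hψ i j hij _ _)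
  have h_node_ne : ∀ i ∈ univ, b1 i (x i) ^ ((1 : ℤ) - G.degree i) ≠ 0 :=
    fun i _ => zpow_ne_zero _ (hb1 i (x i))
  rw [treeFactorized, treePotentialProd, mul_div_right_comm, ← prod_div_distrib]
  simp only [h_ratio]
  rw [Real.log_mul (prod_ne_zero_iff.mpr h_edge_ne) (prod_ne_zero_iff.mpr h_node_ne),
    Real.log_prod h_edge_ne, Real.log_prod h_node_ne, sub_eq_add_neg, ← sum_neg_distrib]
  congr 1
  · refine sum_congr rfl fun e _ => ?_
    induction e with | _ i j => rfl
  · refine sum_congr rfl fun i _ => ?_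
    rw [Real.log_zpow]
    push_cast
    ring

variable [∀ i, Fintype (X i)] {G}

theorem sum_treeFactorized_mul_eq_productMean {r : V} (O : RootedOrientation G r)
    (hb1 : ∀ i s, b1 i s ≠ 0) (hbsym : ∀ i j s t, b2 i j s t = b2 j i t s)
    (f : ((i : V) → X i) → ℝ) :
    ∑ x, treeFactorized G b1 b2 hbsym x * f x =
      productMean b1 (fun x => f x * ∏ v ∈ O.nonroots, edgeRatio b1 b2 x v (O.parent v)) := by
  refine sum_congr rfl fun x _ => ?_
  rw [treeFactorized_eq_prod_mul_prod_edgeRatio G hb1, O.prod_edgeFinset, mul_right_comm, mul_assoc]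
  rfl

theorem sum_treeFactorized_mul_eval (hG : G.IsAcyclic) (hb1 : ∀ i s, b1 i s ≠ 0)
    (hb1sum : ∀ i, ∑ s, b1 i s = 1) (hbsym : ∀ i j s t, b2 i j s t = b2 j i t s)
    (hmarg : ∀ i j, G.Adj i j → ∀ s : X i, ∑ t : X j, b2 i j s t = b1 i s)
    (i : V) (f : X i → ℝ) :
    ∑ x : (i : V) → X i, treeFactorized G b1 b2 hbsym x * f (x i) = ∑ s, b1 i s * f s := by
  obtain ⟨O⟩ := nonempty_rootedOrientation hG i
  have hf : DependsOn (fun x : (i : V) → X i => f (x i)) (O.nonroots : Set V)ᶜ :=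
    fun x y hxy => congrArg f (hxy i O.root_notMem)
  rw [sum_treeFactorized_mul_eq_productMean O hb1,
    productMean_mul_prod_edgeRatio O hb1 hb1sum hbsym hmarg Subset.rfl hf,
    productMean_eval hb1sum]

theorem sum_treeFactorized_mul_eval₂_of_adj (hG : G.IsAcyclic) (hb1 : ∀ i s, b1 i s ≠ 0)
    (hb1sum : ∀ i, ∑ s, b1 i s = 1) (hbsym : ∀ i j s t, b2 i j s t = b2 j i t s)
    (hmarg : ∀ i j, G.Adj i j → ∀ s : X i, ∑ t : X j, b2 i j s t = b1 i s)
    {i j : V} (hij : G.Adj i j) (f : X i → X j → ℝ) :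
    ∑ x : (i : V) → X i, treeFactorized G b1 b2 hbsym x * f (x i) (x j) =
      ∑ s, ∑ t, b2 i j s t * f s t := by
  obtain ⟨O⟩ := nonempty_rootedOrientation hG i
  obtain ⟨hj, hj_parent⟩ := O.mem_nonroots_and_parent_eq_of_adj hij
  let g : X i → X j → ℝ := fun s t => f s t * (b2 i j s t / (b1 i s * b1 j t))
  have hg : DependsOn (fun x : (i : V) → X i => g (x i) (x j)) (O.nonroots.erase j : Set V)ᶜ := by
    intro x y hxy
    simp only [hxy i (by simp [O.root_notMem]), hxy j (by simp)]
  calc ∑ x : (i : V) → X i, treeFactorized G b1 b2 hbsym x * f (x i) (x j)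
      = productMean b1 (fun x => g (x i) (x j) *
          ∏ v ∈ O.nonroots.erase j, edgeRatio b1 b2 x v (O.parent v)) := by
        rw [sum_treeFactorized_mul_eq_productMean O hb1]
        simp only [← mul_prod_erase _ _ hj, hj_parent, edgeRatio_comm b1 hbsym _ j i, ← mul_assoc]
        rfl
    _ = ∑ s, b1 i s * ∑ t, b1 j t * g s t := by
        rw [productMean_mul_prod_edgeRatio O hb1 hb1sum hbsym hmarg (erase_subset _ _) hg,
          productMean_eval₂ hb1sum hij.ne]
    _ = ∑ s, ∑ t, b2 i j s t * f s t := by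
        simp only [mul_sum]
        refine sum_congr rfl fun s _ => sum_congr rfl fun t _ => ?_
        have := hb1 i s
        have := hb1 j t
        simp only [g]
        field_simp

end Beliefs

theorem betheFreeEnergy_eq_variational_general {V : Type*} [Fintype V] [DecidableEq V]
    {X : V → Type*} [∀ i, Fintype (X i)] (G : SimpleGraph V) [DecidableRel G.Adj]
    (hG : G.IsAcyclic) (ψ2 : (i j : V) → X i → X j → ℝ)
    (hψsym : ∀ i j s t, ψ2 i j s t = ψ2 j i t s)
    (hψpos : ∀ i j, G.Adj i j → ∀ s t, 0 < ψ2 i j s t)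
    (b1 : (i : V) → X i → ℝ) (b2 : (i j : V) → X i → X j → ℝ)
    (hb1pos : ∀ i s, 0 < b1 i s) (hb1sum : ∀ i, ∑ s, b1 i s = 1)
    (hbsym : ∀ i j s t, b2 i j s t = b2 j i t s)
    (hb2pos : ∀ i j, G.Adj i j → ∀ s t, 0 < b2 i j s t)
    (hmarg : ∀ i j, G.Adj i j → ∀ s : X i, ∑ t : X j, b2 i j s t = b1 i s) :
    betheFreeEnergy G b1 b2 ψ2 hbsym hψsym
      = ∑ x : (i : V) → X i, treeFactorized G b1 b2 hbsym x
          * Real.log (treeFactorized G b1 b2 hbsym x / treePotentialProd G ψ2 hψsym x) := by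
  have hb1 : ∀ i s, b1 i s ≠ 0 := fun i s => (hb1pos i s).ne'
  simp only [log_treeFactorized_div_treePotentialProd G hb1 hbsym
    (fun i j hij s t => (hb2pos i j hij s t).ne') hψsym
    (fun i j hij s t => (hψpos i j hij s t).ne'), mul_sub, sum_sub_distrib, mul_sum]
  rw [sum_comm, sum_comm (s := (univ : Finset ((i : V) → X i))), betheFreeEnergy]
  congr 1
  · refine sum_congr rfl fun e he => ?_
    induction e with | _ i j =>
    exact (sum_treeFactorized_mul_eval₂_of_adj hG hb1 hb1sum hbsym hmarg
      (SimpleGraph.mem_edgeFinset.mp he) fun s t => Real.log (b2 i j s t / ψ2 i j s t)).symm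
  · refine sum_congr rfl fun i _ => ?_
    simp only [mul_left_comm _ ((G.degree i : ℝ) - 1), ← mul_sum]
    rw [sum_treeFactorized_mul_eval hG hb1 hb1sum hbsym hmarg i fun s => Real.log (b1 i s)]

/-- **Bethe free energy as a variational free energy on a tree.**
Given a consistent belief system on the tree `T` and the tree-factorized
distribution `b`, the Bethe free energy of the belief system equals the
variational free energy of `b`: `F_B = Σ_x b(x) · ln (b(x) / p̃(x))`. -/
theorem betheFreeEnergy_eq_variational (V : Type*) [Fintype V] [DecidableEq V] [Nonempty V]
    (X : V → Type*) [∀ i, Fintype (X i)] [∀ i, Nonempty (X i)]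
    (T : SimpleGraph V) [DecidableRel T.Adj] (hT : T.IsTree)
    (ψ2 : (i j : V) → X i → X j → ℝ)
    (hψsym : ∀ i j s t, ψ2 i j s t = ψ2 j i t s)
    (hψpos : ∀ i j, T.Adj i j → ∀ s t, 0 < ψ2 i j s t)
    (b1 : (i : V) → X i → ℝ) (b2 : (i j : V) → X i → X j → ℝ)
    (hb1pos : ∀ i s, 0 < b1 i s) (hb1sum : ∀ i, ∑ s, b1 i s = 1)
    (hbsym : ∀ i j s t, b2 i j s t = b2 j i t s)
    (hb2pos : ∀ i j, T.Adj i j → ∀ s t, 0 < b2 i j s t)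
    (hb2sum : ∀ i j, T.Adj i j → ∑ s : X i, ∑ t : X j, b2 i j s t = 1)
    (hmarg : ∀ i j, T.Adj i j → ∀ s : X i, ∑ t : X j, b2 i j s t = b1 i s) :
    betheFreeEnergy T b1 b2 ψ2 hbsym hψsym
      = ∑ x : (i : V) → X i, treeFactorized T b1 b2 hbsym x
          * Real.log (treeFactorized T b1 b2 hbsym x / treePotentialProd T ψ2 hψsym x) := by
  exact betheFreeEnergy_eq_variational_general T hT.isAcyclic ψ2 hψsym hψpos b1 b2 hb1pos hb1sum
    hbsym hb2pos hmarg
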